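/- Let a ∈ (0,1) be irrational and let δ ∈ (0,1). Then there exists a constant C > 0 depending only on a and δ such that for all sufficiently large n, writing d = 2^n and k = ⌊d^δ⌋, one has d^{a+δ(1−a) − C/√(log₂ d)} ≤ log₂ a_{n,k} ≤ d^{a+δ(1−a) + C/√(log₂ d)}. (This is Theorem 1.5, part 2.) -/

import Mathlib

/-- `A_a = {⌊n/a⌋ : n ∈ ℕ, n ≥ 1}`, the set of floors of positive multiples of `1/a`. -/
def Aset (a : ℝ) : Set ℕ := {m | ∃ n : ℕ, 1 ≤ n ∧ m = ⌊(n : ℝ) / a⌋₊}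

/-- The generating function `F_n(t) = ∑_k a_{n,k} t^k` of the face numbers of the basic
Hanner-type polytopes: `F_0 = t + 2`, and `F_{n+1} = F_n ^ 2` for `n ∈ A_a` (product
step), `F_{n+1} = t·F_n ^ 2 + 2·F_n` for `n ∉ A_a` (convex hull step).
The coefficient `a_{n,k}` is `(F a n).coeff k`. -/
noncomputable def F (a : ℝ) : ℕ → Polynomial ℤ
  | 0 => Polynomial.X + 2
  | n + 1 =>
      haveI := Classical.propDecidable (n ∈ Aset a)
      if n ∈ Aset a then F a n ^ 2
      else Polynomial.X * F a n ^ 2 + 2 * F a n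

open Polynomial in
lemma F_succ_mem (a : ℝ) (n : ℕ) (h : n ∈ Aset a) : F a (n+1) = F a n ^ 2 := by
  simp [F, h]

open Polynomial in
lemma F_succ_not (a : ℝ) (n : ℕ) (h : n ∉ Aset a) :
    F a (n+1) = X * F a n ^ 2 + 2 * F a n := by
  simp [F, h]

open Classical in
/-- number of product steps among the first `n` steps -/
noncomputable def cnt (a : ℝ) : ℕ → ℕ
  | 0 => 0
  | n + 1 => if n ∈ Aset a then cnt a n + 1 else cnt a n

lemma cnt_mem (a : ℝ) (n : ℕ) (h : n ∈ Aset a) : cnt a (n+1) = cnt a n + 1 := by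
  simp [cnt, h]

lemma cnt_not (a : ℝ) (n : ℕ) (h : n ∉ Aset a) : cnt a (n+1) = cnt a n := by
  simp [cnt, h]

lemma mem_Aset_iff (a : ℝ) (ha : a ∈ Set.Ioo (0 : ℝ) 1) (m : ℕ) :
    m ∈ Aset a ↔ ∃ n : ℕ, 1 ≤ n ∧ a * m ≤ n ∧ (n : ℝ) < a * (m + 1) := by
  have h0 := ha.1
  unfold Aset
  simp only [Set.mem_ofPred_eq]
  refine exists_congr fun n => and_congr_right fun _ => ?_
  rw [eq_comm, Nat.floor_eq_iff (by positivity), le_div_iff₀ h0, div_lt_iff₀ h0,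
    mul_comm a, mul_comm a]

lemma zero_not_mem (a : ℝ) (ha : a ∈ Set.Ioo (0 : ℝ) 1) : 0 ∉ Aset a := by
  rw [mem_Aset_iff a ha]
  rintro ⟨n, h1, -, h3⟩
  have : (1 : ℝ) ≤ n := by exact_mod_cast h1
  have := ha.2
  simp at h3
  linarith

lemma cnt_bounds (a : ℝ) (ha : a ∈ Set.Ioo (0 : ℝ) 1) (m : ℕ) :
    a * (m + 1 : ℕ) - 1 ≤ cnt a (m + 1) ∧ (cnt a (m + 1) : ℝ) < a * (m + 1 : ℕ) := by
  have h0 := ha.1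
  have h1 := ha.2
  induction m with
  | zero =>
    rw [cnt_not a 0 (zero_not_mem a ha)]
    simp [cnt]
    constructor <;> linarith
  | succ m ih =>
    obtain ⟨i1, i2⟩ := ih
    by_cases h : m + 1 ∈ Aset a
    · rw [cnt_mem _ _ h]
      rw [mem_Aset_iff a ha] at h
      obtain ⟨n, -, h3, h4⟩ := h
      have : cnt a (m+1) < n := by
        have : (cnt a (m+1) : ℝ) < n := by linarith
        exact_mod_cast this
      have : (cnt a (m+1) : ℝ) + 1 ≤ n := by exact_mod_cast this
      push_cast at *
      constructor <;> linarith
    · rw [cnt_not _ _ h]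
      rw [mem_Aset_iff a ha] at h
      push Not at h
      have := h (cnt a (m+1) + 1) (by omega) (by push_cast at *; linarith)
      push_cast at *
      constructor <;> linarith

lemma coeff_hull (P : Polynomial ℤ) (k : ℕ) :
    (Polynomial.X * P ^ 2 + 2 * P).coeff (k+1) = (P^2).coeff k + 2 * P.coeff (k+1) := by
  rw [Polynomial.coeff_add, Polynomial.coeff_X_mul, Polynomial.coeff_ofNat_mul]

lemma coeff_hull0 (P : Polynomial ℤ) :
    (Polynomial.X * P ^ 2 + 2 * P).coeff 0 = 2 * P.coeff 0 := by
  rw [Polynomial.coeff_add, Polynomial.coeff_ofNat_mul]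
  simp

lemma coeff_sq_nonneg (P : Polynomial ℤ) (h : ∀ k, 0 ≤ P.coeff k) (k : ℕ) :
    0 ≤ (P^2).coeff k := by
  rw [pow_two, Polynomial.coeff_mul]
  exact Finset.sum_nonneg fun x _ => mul_nonneg (h _) (h _)

lemma coeff_sq_ge (P : Polynomial ℤ) (h : ∀ k, 0 ≤ P.coeff k) (i j : ℕ) :
    P.coeff i * P.coeff j ≤ (P^2).coeff (i + j) := by
  rw [pow_two, Polynomial.coeff_mul]
  exact Finset.single_le_sum (f := fun x : ℕ × ℕ => P.coeff x.1 * P.coeff x.2)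
    (fun x _ => mul_nonneg (h _) (h _)) (a := (i, j)) (by simp)

lemma F_nonneg (a : ℝ) (n : ℕ) : ∀ k, 0 ≤ (F a n).coeff k := by
  induction n with
  | zero =>
    intro k
    rcases k with _ | _ | k <;> simp [F, Polynomial.coeff_X, Polynomial.coeff_ofNat_succ]
  | succ n ih =>
    intro k
    by_cases h : n ∈ Aset a
    · rw [F_succ_mem _ _ h]; exact coeff_sq_nonneg _ ih k
    · rw [F_succ_not _ _ h]
      rcases k with _ | k
      · rw [coeff_hull0]; linarith [ih 0]
      · rw [coeff_hull]; linarith [ih (k+1), coeff_sq_nonneg _ ih k]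

lemma F_low (a : ℝ) (ha : a ∈ Set.Ioo (0 : ℝ) 1) (m : ℕ) :
    ∀ j ≤ 2, (2 : ℤ) ^ (2 ^ cnt a (m+1)) ≤ (F a (m+1)).coeff j := by
  induction m with
  | zero =>
    rw [cnt_not a 0 (zero_not_mem a ha), F_succ_not a 0 (zero_not_mem a ha)]
    intro j hj
    have e : (Polynomial.X * F a 0 ^ 2 + 2 * F a 0)
        = Polynomial.X ^ 3 + Polynomial.C 4 * Polynomial.X ^ 2
          + Polynomial.C 6 * Polynomial.X + Polynomial.C 4 := by
      simp only [F, map_ofNat]; ring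
    rw [e]
    interval_cases j <;> simp [cnt, Polynomial.coeff_X, Polynomial.coeff_X_pow]
  | succ m ih =>
    intro j hj
    have hp : (0 : ℤ) < 2 ^ (2 ^ cnt a (m+1)) := by positivity
    by_cases h : m + 1 ∈ Aset a
    · rw [F_succ_mem _ _ h, cnt_mem _ _ h, pow_succ 2 (cnt a (m+1)), pow_mul, pow_two]
      have := coeff_sq_ge _ (F_nonneg a (m+1)) 0 j
      rw [zero_add] at this
      exact (mul_le_mul (ih 0 (by omega)) (ih j hj) hp.le (by linarith [ih 0 (by omega)])).trans this
    · rw [F_succ_not _ _ h, cnt_not _ _ h]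
      rcases j with _ | j
      · rw [coeff_hull0]; linarith [ih 0 (by omega)]
      · rw [coeff_hull]; linarith [ih (j+1) hj, coeff_sq_nonneg _ (F_nonneg a (m+1)) j]

lemma F_low_iter (a : ℝ) (ha : a ∈ Set.Ioo (0 : ℝ) 1) (m r : ℕ) :
    ∀ k, 2 ^ r ≤ k + 1 → k ≤ 2 ^ r * 2 →
      ((2 : ℤ) ^ (2 ^ cnt a (m+1))) ^ (2 ^ r) ≤ (F a (m+1+r)).coeff k := by
  induction r with
  | zero => intro k _ h2; simpa using F_low a ha m k (by simpa using h2)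
  | succ r ih =>
    have key : ∀ l, 2 ^ r * 2 ≤ l + 2 → l ≤ 2 ^ r * 4 →
      ((2 : ℤ) ^ (2 ^ cnt a (m+1))) ^ (2 ^ (r+1)) ≤ (F a (m+1+r) ^ 2).coeff l := by
      intro l h1 h2
      have := coeff_sq_ge _ (F_nonneg a (m+1+r)) (l/2) (l - l/2)
      rw [show l/2 + (l - l/2) = l by omega] at this
      have i1 := ih (l/2) (by omega) (by omega)
      have i2 := ih (l - l/2) (by omega) (by omega)
      rw [pow_succ 2 r, pow_mul _ (2^r) 2, pow_two]
      have hp : (0 : ℤ) < ((2 : ℤ) ^ (2 ^ cnt a (m+1))) ^ (2 ^ r) := by positivity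
      exact (mul_le_mul i1 i2 hp.le (by linarith)).trans this
    intro k h1 h2
    rw [pow_succ] at h1 h2
    have hr : 1 ≤ 2 ^ r := Nat.one_le_two_pow
    rw [← add_assoc]
    by_cases h : m + 1 + r ∈ Aset a
    · rw [F_succ_mem _ _ h]
      exact key k (by omega) (by omega)
    · rw [F_succ_not _ _ h]
      rcases k with _ | k
      · omega
      · rw [coeff_hull]
        linarith [key k (by omega) (by omega), F_nonneg a (m+1+r) (k+1)]

open Polynomial in
lemma ev_two (t : ℝ) : aeval t (2 : ℤ[X]) = 2 := map_ofNat _ 2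

open Polynomial in
lemma ev_mem (a t : ℝ) (n : ℕ) (h : n ∈ Aset a) :
    aeval t (F a (n+1)) = (aeval t (F a n)) ^ 2 := by
  rw [F_succ_mem _ _ h]; simp

open Polynomial in
lemma ev_not (a t : ℝ) (n : ℕ) (h : n ∉ Aset a) :
    aeval t (F a (n+1)) = t * (aeval t (F a n)) ^ 2 + 2 * aeval t (F a n) := by
  rw [F_succ_not _ _ h]; simp [ev_two]

open Polynomial in
lemma ev_ge (a t : ℝ) (ht : 0 < t) (n : ℕ) : 2 ≤ aeval t (F a n) := by
  induction n with
  | zero => simp [F, ev_two]; linarith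
  | succ n ih =>
    by_cases h : n ∈ Aset a
    · rw [ev_mem _ _ _ h]; nlinarith
    · rw [ev_not _ _ _ h]
      have : 0 ≤ t * (aeval t (F a n)) ^ 2 := by positivity
      linarith

open Polynomial in
lemma ev_phase1 (a t : ℝ) (ht : 0 < t) (ht1 : t ≤ 1) (n : ℕ)
    (hX : t * 2 ^ ((2 + 2 * n) * 2 ^ cnt a n) ≤ 1) :
    aeval t (F a n) ≤ 2 ^ ((2 + 2 * n) * 2 ^ cnt a n) := by
  induction n with
  | zero => simp [F, cnt, ev_two]; linarith
  | succ n ih =>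
    have hc : cnt a n ≤ cnt a (n+1) := by
      by_cases h : n ∈ Aset a
      · rw [cnt_mem _ _ h]; omega
      · rw [cnt_not _ _ h]
    have hX' : t * 2 ^ ((2 + 2 * n) * 2 ^ cnt a n) ≤ 1 := by
      refine le_trans ?_ hX
      gcongr
      · norm_num
      · omega
      · norm_num
    have ih := ih hX'
    have h2 := ev_ge a t ht n
    by_cases h : n ∈ Aset a
    · rw [ev_mem _ _ _ h, cnt_mem _ _ h]
      calc (aeval t (F a n)) ^ 2 ≤ (2 ^ ((2 + 2 * n) * 2 ^ cnt a n)) ^ 2 := by gcongr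
        _ = 2 ^ ((2 + 2 * n) * 2 ^ (cnt a n + 1)) := by
          rw [← pow_mul]; congr 1; ring
        _ ≤ _ := by
          gcongr
          · norm_num
          · omega
    · rw [ev_not _ _ _ h, cnt_not _ _ h]
      have h3 : t * aeval t (F a n) ≤ 1 := le_trans (by gcongr) hX'
      calc t * (aeval t (F a n)) ^ 2 + 2 * aeval t (F a n) ≤ 2 ^ 2 * aeval t (F a n) := by nlinarith
        _ ≤ 2 ^ 2 * 2 ^ ((2 + 2 * n) * 2 ^ cnt a n) := by gcongr
        _ = 2 ^ (2 + (2 + 2 * n) * 2 ^ cnt a n) := by rw [pow_add]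
        _ ≤ _ := by
          have : 1 ≤ 2 ^ cnt a n := Nat.one_le_two_pow
          gcongr
          · norm_num
          · nlinarith

open Polynomial in
lemma ev_phase2 (a t B : ℝ) (ht : 0 < t) (ht1 : t ≤ 1) (m : ℕ)
    (hB : aeval t (F a m) ≤ B) (r : ℕ) :
    2 * aeval t (F a (m + r)) ≤ (2 * B) ^ (2 ^ r) := by
  induction r with
  | zero => simpa using hB
  | succ r ih =>
    rw [← add_assoc, pow_succ 2 r, pow_mul]
    have h2 := ev_ge a t ht (m + r)
    refine le_trans ?_ (pow_le_pow_left₀ (by linarith) ih 2)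
    by_cases h : m + r ∈ Aset a
    · rw [ev_mem _ _ _ h]; nlinarith
    · rw [ev_not _ _ _ h]; nlinarith [mul_le_mul_of_nonneg_right ht1 (sq_nonneg (aeval t (F a (m+r))))]

open Polynomial in
lemma coeff_le_ev (a t : ℝ) (ht : 0 < t) (n k : ℕ) :
    ((F a n).coeff k : ℝ) * t ^ k ≤ aeval t (F a n) := by
  rw [aeval_eq_sum_range' (n := max (k+1) ((F a n).natDegree + 1)) (by omega)]
  refine le_trans (le_of_eq ?_) (Finset.single_le_sum (f := fun i => (F a n).coeff i • t ^ i)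
    ?_ (a := k) (by simp))
  · simp
  · intro i _
    have : (0 : ℝ) ≤ (F a n).coeff i := by exact_mod_cast F_nonneg a n i
    simp only [zsmul_eq_mul]
    positivity

lemma F_up (a : ℝ) (m r k : ℕ) (X : ℕ) (hX : X = (2 + 2 * m) * 2 ^ cnt a m) :
    ((F a (m + r)).coeff k : ℝ) ≤ 2 ^ ((X + 1) * 2 ^ r + X * k) := by
  have ht : (0 : ℝ) < (2 ^ X)⁻¹ := by positivity
  have ht1 : ((2 : ℝ) ^ X)⁻¹ ≤ 1 := inv_le_one_of_one_le₀ (one_le_pow₀ (by norm_num))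
  have h1 := ev_phase1 a _ ht ht1 m (by rw [← hX, inv_mul_cancel₀ (by positivity)])
  rw [← hX] at h1
  have h2 := ev_phase2 a _ _ ht ht1 m h1 r
  have h3 := coeff_le_ev a _ ht (m + r) k
  have h4 := ev_ge a _ ht (m + r)
  rw [inv_pow, ← div_eq_mul_inv, div_le_iff₀ (by positivity)] at h3
  refine h3.trans ?_
  rw [pow_add, pow_mul, pow_mul, pow_succ, mul_comm _ (2 : ℝ)]
  gcongr
  linarith

/-- **Theorem 1.5, part 2.** For irrational `a ∈ (0,1)` and `δ ∈ (0,1)` there is a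
constant `C > 0` (depending only on `a` and `δ`) such that for all large `n`, with
`d = 2^n` and `k = ⌊d^δ⌋` (so `log₂ d = n`),
`d^(a+δ(1-a) - C/√(log₂ d)) ≤ log₂ a_{n,k} ≤ d^(a+δ(1-a) + C/√(log₂ d))`. -/
theorem face_number_asymptotics_irrational
    (a : ℝ) (ha : a ∈ Set.Ioo (0 : ℝ) 1) (hirr : Irrational a)
    (δ : ℝ) (hδ : δ ∈ Set.Ioo (0 : ℝ) 1) :
    ∃ C : ℝ, 0 < C ∧ ∃ N : ℕ, ∀ n : ℕ, N ≤ n →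
      ((2 : ℝ) ^ n) ^ (a + δ * (1 - a) - C / Real.sqrt n) ≤
          Real.logb 2 (((F a n).coeff ⌊((2 : ℝ) ^ n) ^ δ⌋₊ : ℝ)) ∧
      Real.logb 2 (((F a n).coeff ⌊((2 : ℝ) ^ n) ^ δ⌋₊ : ℝ)) ≤
          ((2 : ℝ) ^ n) ^ (a + δ * (1 - a) + C / Real.sqrt n) := by

  obtain ⟨h0, h1⟩ := ha
  obtain ⟨d0, d1⟩ := hδ
  refine ⟨7, by norm_num, 1, fun n hn => ?_⟩
  have hn' : (1 : ℝ) ≤ n := by exact_mod_cast hn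
  set s := Real.sqrt n with hs
  have hs1 : 1 ≤ s := Real.one_le_sqrt.2 hn'
  have hss : s * s = n := Real.mul_self_sqrt (by linarith)
  have hdiv : (n : ℝ) * (7 / s) = 7 * s := by
    rw [← hss]; field_simp
  have hbase : ∀ x : ℝ, ((2 : ℝ) ^ n) ^ x = 2 ^ (n * x) := by
    intro x
    rw [← Real.rpow_natCast, ← Real.rpow_mul (by norm_num)]
  simp only [hbase]
  set k := ⌊(2 : ℝ) ^ (n * δ)⌋₊ with hk
  set r := ⌊n * δ⌋₊ with hr
  have hr1 : (r : ℝ) ≤ n * δ := Nat.floor_le (by positivity)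
  have hr2 : n * δ < r + 1 := Nat.lt_floor_add_one _
  have hrn : r < n := by
    have : (r : ℝ) < n := by nlinarith
    exact_mod_cast this
  obtain ⟨m, hm⟩ : ∃ m, n = m + 1 + r := ⟨n - r - 1, by omega⟩
  have hmR : (n : ℝ) = (m + 1 : ℕ) + r := by exact_mod_cast hm
  have hk1 : (k : ℝ) ≤ 2 ^ (n * δ) := Nat.floor_le (by positivity)
  have hk2 : 2 ^ r ≤ k := by
    apply Nat.le_floor
    push_cast
    rw [← Real.rpow_natCast]
    exact Real.rpow_le_rpow_of_exponent_le (by norm_num) hr1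
  have hk3 : k ≤ 2 ^ r * 2 := by
    have : (k : ℝ) ≤ 2 ^ (r + 1) := by
      refine hk1.trans ?_
      rw [← Real.rpow_natCast]
      apply Real.rpow_le_rpow_of_exponent_le (by norm_num)
      push_cast; linarith
    rw [← pow_succ]
    exact_mod_cast this
  obtain ⟨c1, c2⟩ := cnt_bounds a ⟨h0, h1⟩ m
  have low := F_low_iter a ⟨h0, h1⟩ m r k (by omega) hk3
  rw [← hm] at low
  have lowR : ((2 : ℝ) ^ (2 ^ cnt a (m+1))) ^ (2 ^ r) ≤ ((F a n).coeff k : ℝ) := by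
    exact_mod_cast low
  rw [← pow_mul, ← pow_add] at lowR
  have hpos : (0 : ℝ) < ((F a n).coeff k : ℝ) := lt_of_lt_of_le (by positivity) lowR
  constructor
  · rw [Real.le_logb_iff_rpow_le (by norm_num) hpos]
    refine le_trans ?_ lowR
    rw [← Real.rpow_natCast 2 (2 ^ _)]
    apply Real.rpow_le_rpow_of_exponent_le (by norm_num)
    push_cast
    rw [← Real.rpow_natCast]
    apply Real.rpow_le_rpow_of_exponent_le (by norm_num)
    push_cast
    rw [mul_sub, hdiv]
    have e : ((m + 1 : ℕ) : ℝ) = n - r := by linarith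
    rw [e] at c1
    nlinarith [mul_le_mul_of_nonneg_left hr2.le (sub_nonneg.2 h1.le)]
  · rw [Real.logb_le_iff_le_rpow (by norm_num) hpos]
    have up := F_up a (m+1) r k _ rfl
    rw [← hm] at up
    refine up.trans ?_
    rw [← Real.rpow_natCast 2]
    apply Real.rpow_le_rpow_of_exponent_le (by norm_num)
    push_cast
    have hrr : (2 : ℝ) ^ r ≤ 2 ^ (n * δ) := by
      rw [← Real.rpow_natCast]
      exact Real.rpow_le_rpow_of_exponent_le (by norm_num) hr1
    set D := (2 : ℝ) ^ (n * δ) with hD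
    set P := (2 : ℝ) ^ cnt a (m+1) with hP
    have hP1 : 1 ≤ P := one_le_pow₀ (by norm_num)
    have hPle : P ≤ 2 ^ (a * (n - n * δ + 1)) := by
      rw [hP, ← Real.rpow_natCast]
      apply Real.rpow_le_rpow_of_exponent_le (by norm_num)
      refine c2.le.trans ?_
      gcongr
      linarith
    have hmn : ((m : ℝ) + 1) ≤ n := by
      have : (0 : ℝ) ≤ r := by positivity
      push_cast at hmR; linarith
    have hn2 : (n : ℝ) ≤ 2 ^ (2 * s) := by
      have : s ≤ 2 ^ s := by
        have := Real.add_one_le_exp (s * Real.log 2)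
        have h3 : (2 : ℝ) ^ s = Real.exp (s * Real.log 2) := by
          rw [Real.rpow_def_of_pos (by norm_num), mul_comm]
        have h4 := one_add_mul_self_le_rpow_one_add (s := (1 : ℝ)) (by norm_num) hs1
        norm_num at h4
        linarith
      rw [two_mul, Real.rpow_add (by norm_num), ← hss]
      gcongr
    have hXpos : 1 ≤ (2 + 2 * ((m : ℝ) + 1)) * P := by
      have : (0 : ℝ) ≤ m := by positivity
      nlinarith
    have hDpos : 0 < D := by positivity
    calc ((2 + 2 * ((m : ℝ) + 1)) * P + 1) * 2 ^ r + (2 + 2 * ((m : ℝ) + 1)) * P * k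
        ≤ ((2 + 2 * ((m : ℝ) + 1)) * P + 1) * D + (2 + 2 * ((m : ℝ) + 1)) * P * D := by
          gcongr
      _ ≤ 3 * ((2 + 2 * ((m : ℝ) + 1)) * P) * D := by nlinarith
      _ ≤ 3 * ((2 * n + 2 * n) * P) * D := by gcongr; linarith
      _ = 12 * n * P * D := by ring
      _ ≤ (2 : ℝ) ^ (4 : ℝ) * 2 ^ (2 * s) * 2 ^ (a * (n - n * δ + 1)) * 2 ^ (n * δ) := by
          gcongr
          norm_num
      _ = 2 ^ (4 + 2 * s + a * (n - n * δ + 1) + n * δ) := by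
          rw [← Real.rpow_add (by norm_num), ← Real.rpow_add (by norm_num),
            ← Real.rpow_add (by norm_num)]
      _ ≤ _ := by
          apply Real.rpow_le_rpow_of_exponent_le (by norm_num)
          rw [mul_add (n : ℝ), hdiv]
          nlinarith
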